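/- For every respecting forest P of order 2 there exists a unique isominimal realization of P within ℛ₂, i.e., a unique finite set X of ordinals which, equipped with the induced relations ≤, ≤₁, ≤₂, is isomorphic to P and pointwise minimal (comparing increasing enumerations) among all finite substructures of ℛ₂ isomorphic to P; moreover every element of X is smaller than 1^∞. -/

import Mathlib

open FirstOrder

/-- The relation symbols of the language of `ℛ₂`: three binary relations. -/
inductive ordRel : ℕ → Type
  | le : ordRel 2
  | le1 : ordRel 2
  | le2 : ordRel 2

/-- The first-order language with three binary relation symbols `≤`, `≤₁`, `≤₂`. -/
def ordLang : FirstOrder.Language := ⟨fun _ => Empty, ordRel⟩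

/-- The `ordLang`-structure on the set of ordinals below `β`, interpreting the three
relation symbols by `≤` and the given relations `le1`, `le2`. -/
def segStr (le1 le2 : Ordinal → Ordinal → Prop) (β : Ordinal) :
    ordLang.Structure {x : Ordinal // x < β} where
  funMap := fun f => Empty.elim f
  RelMap
    | .le => fun v => (v 0).1 ≤ (v 1).1
    | .le1 => fun v => le1 (v 0).1 (v 1).1
    | .le2 => fun v => le2 (v 0).1 (v 1).1

/-- Σ₁-formulas: a block of existential quantifiers applied to a quantifier-free formula. -/
inductive IsSigma1 {L : FirstOrder.Language} {α : Type} :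
    {n : ℕ} → L.BoundedFormula α n → Prop
  | of_isQF {n} {φ : L.BoundedFormula α n} (h : φ.IsQF) : IsSigma1 φ
  | ex {n} {φ : L.BoundedFormula α (n + 1)} (h : IsSigma1 φ) : IsSigma1 φ.ex

/-- Π₁-formulas: a block of universal quantifiers applied to a quantifier-free formula. -/
inductive IsPi1 {L : FirstOrder.Language} {α : Type} :
    {n : ℕ} → L.BoundedFormula α n → Prop
  | of_isQF {n} {φ : L.BoundedFormula α n} (h : φ.IsQF) : IsPi1 φ
  | all {n} {φ : L.BoundedFormula α (n + 1)} (h : IsPi1 φ) : IsPi1 φ.all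

/-- Σ₂-formulas: a block of existential quantifiers applied to a Π₁-formula. -/
inductive IsSigma2 {L : FirstOrder.Language} {α : Type} :
    {n : ℕ} → L.BoundedFormula α n → Prop
  | of_isPi1 {n} {φ : L.BoundedFormula α n} (h : IsPi1 φ) : IsSigma2 φ
  | ex {n} {φ : L.BoundedFormula α (n + 1)} (h : IsSigma2 φ) : IsSigma2 φ.ex

/-- Realization of a formula with `k` parameters in the segment structure below `β`. -/
def RealizeIn (le1 le2 : Ordinal → Ordinal → Prop) (β : Ordinal) {k : ℕ}
    (φ : ordLang.Formula (Fin k)) (v : Fin k → {x : Ordinal // x < β}) : Prop :=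
  letI := segStr le1 le2 β
  φ.Realize v

/-- `a ≤ b` and the segment below `a` is an elementary substructure of the segment below `b`
with respect to the class `C` of formulas (with parameters from below `a`). -/
def ElemSub (C : ∀ k : ℕ, ordLang.Formula (Fin k) → Prop)
    (le1 le2 : Ordinal → Ordinal → Prop) (a b : Ordinal) : Prop :=
  ∃ hab : a ≤ b,
    ∀ (k : ℕ) (φ : ordLang.Formula (Fin k)), C k φ →
      ∀ v : Fin k → {x : Ordinal // x < a},
        RealizeIn le1 le2 a φ v ↔
          RealizeIn le1 le2 b φ (fun j => ⟨(v j).1, lt_of_lt_of_le (v j).2 hab⟩)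

/-- The pair of relations `le1`, `le2` satisfies the simultaneous recursive definition of
`≤₁` and `≤₂` on the ordinals: `α ≤ᵢ β` iff `α ≤ β` and the segment below `α` is a
Σᵢ-elementary substructure of the segment below `β`. -/
def IsR2Pair (le1 le2 : Ordinal → Ordinal → Prop) : Prop :=
  (∀ a b, le1 a b ↔ ElemSub (fun _ φ => IsSigma1 φ) le1 le2 a b) ∧
  (∀ a b, le2 a b ↔ ElemSub (fun _ φ => IsSigma2 φ) le1 le2 a b)

/-- The strict part of `≤₁`. -/
def Lt1 (le1 : Ordinal → Ordinal → Prop) (a b : Ordinal) : Prop := le1 a b ∧ a ≠ b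

/-- The strict part of `≤₂`. -/
def Lt2 (le2 : Ordinal → Ordinal → Prop) (a b : Ordinal) : Prop := le2 a b ∧ a ≠ b

/-- `1^∞`: the least ordinal `ν` such that below `ν` there are `<₂`-chains of every finite
length. -/
noncomputable def OneInfty (le2 : Ordinal → Ordinal → Prop) : Ordinal :=
  sInf {ν : Ordinal | ∀ n : ℕ, ∃ β : Fin n → Ordinal,
    (∀ i, β i < ν) ∧
    ∀ (i : ℕ) (hi : i + 1 < n), Lt2 le2 (β ⟨i, Nat.lt_of_succ_lt hi⟩) (β ⟨i + 1, hi⟩)}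

/-- A respecting forest of order 2: a finite structure with a linear order `≤₀` and partial
orders `≤₁`, `≤₂` which are forests, with `≤₂ ⊆ ≤₁ ⊆ ≤₀`, and `≤ᵢ₊₁` respecting `≤ᵢ`. -/
structure RForest where
  P : Type
  [fintypeP : Fintype P]
  le0 : P → P → Prop
  le1 : P → P → Prop
  le2 : P → P → Prop
  le0_refl : ∀ p, le0 p p
  le0_trans : ∀ p q r, le0 p q → le0 q r → le0 p r
  le0_antisymm : ∀ p q, le0 p q → le0 q p → p = q
  le0_total : ∀ p q, le0 p q ∨ le0 q p
  le1_refl : ∀ p, le1 p p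
  le1_trans : ∀ p q r, le1 p q → le1 q r → le1 p r
  le1_antisymm : ∀ p q, le1 p q → le1 q p → p = q
  le2_refl : ∀ p, le2 p p
  le2_trans : ∀ p q r, le2 p q → le2 q r → le2 p r
  le2_antisymm : ∀ p q, le2 p q → le2 q p → p = q
  le2_sub_le1 : ∀ p q, le2 p q → le1 p q
  le1_sub_le0 : ∀ p q, le1 p q → le0 p q
  forest1 : ∀ p q r, le1 q p → le1 r p → le1 q r ∨ le1 r q
  forest2 : ∀ p q r, le2 q p → le2 r p → le2 q r ∨ le2 r q
  respects1 : ∀ p q r, le0 p q → le0 q r → le1 p r → le1 p q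
  respects2 : ∀ p q r, le1 p q → le1 q r → le2 p r → le2 p q

attribute [instance] RForest.fintypeP

/-- The finite set `X` of ordinals, with the relations induced from `ℛ₂`, is isomorphic to the
respecting forest `F`. -/
def Realizes (le1 le2 : Ordinal → Ordinal → Prop) (F : RForest) (X : Finset Ordinal) : Prop :=
  ∃ e : F.P ≃ {x // x ∈ X}, ∀ p q : F.P,
    (F.le0 p q ↔ ((e p : Ordinal) ≤ (e q : Ordinal))) ∧
    (F.le1 p q ↔ le1 (e p : Ordinal) (e q : Ordinal)) ∧
    (F.le2 p q ↔ le2 (e p : Ordinal) (e q : Ordinal))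

/-- Pointwise comparison of two finite sets of ordinals via their increasing enumerations. -/
def pwLE (X Y : Finset Ordinal) : Prop :=
  ∃ h : X.card = Y.card, ∀ i : Fin X.card,
    ((X.orderIsoOfFin rfl i : {x // x ∈ X}) : Ordinal) ≤
      ((Y.orderIsoOfFin h.symm i : {x // x ∈ Y}) : Ordinal)

/-- `X` is the isominimal realization of the respecting forest `F` in `ℛ₂`: it is isomorphic
to `F` and pointwise minimal among all finite substructures of `ℛ₂` isomorphic to `F`. -/
def IsIsominimalRealization (le1 le2 : Ordinal → Ordinal → Prop) (F : RForest)
    (X : Finset Ordinal) : Prop :=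
  Realizes le1 le2 F X ∧ ∀ Y : Finset Ordinal, Realizes le1 le2 F Y → pwLE X Y

/-- A covering of the respecting forest `F` into `ℛ₂`. -/
def IsCovering (le1 le2 : Ordinal → Ordinal → Prop) (F : RForest)
    (c : F.P → Ordinal) : Prop :=
  (∀ p q, F.le0 p q ↔ c p ≤ c q) ∧
  (∀ p q, F.le1 p q → le1 (c p) (c q)) ∧
  (∀ p q, F.le2 p q → le2 (c p) (c q))


/-- A covering of the respecting forest `F` into the respecting forest `G`. -/
def ForestCovering (F G : RForest) (f : F.P → G.P) : Prop :=
  (∀ p q, F.le0 p q ↔ G.le0 (f p) (f q)) ∧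
  (∀ p q, F.le1 p q → G.le1 (f p) (f q)) ∧
  (∀ p q, F.le2 p q → G.le2 (f p) (f q))

/-!
A covering maps the forest into the ordinals, preserving `≤₁` and `≤₂` but possibly adding
relations; coverings are compared pointwise. They exist, below `1^∞`, because a long enough
`<₂`-chain of ordinals covers every forest, and minimal ones exist because the ordinals are
well-founded. If a minimal covering had a relation `c p ≤ᵢ c q` that is absent from the forest,
`Σᵢ`-reflection from `c q` to `c p` would move the points from `p` up to `q` below `c p` and thus
yield a smaller covering; hence a minimal covering is an embedding. Two minimal coverings coincide:
at their first difference `p`, the smaller one could be grafted onto the larger one up to the first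
point of a maximal `≤₁`-branch through `p` where it ceases to be smaller, and the result would still
be a covering. The image of the least covering thus obtained is the isominimal realization.
-/

/-! ### Quantifier complexity -/

theorem isQF_toFormula {L : Language} {α : Type*} {n : ℕ} {φ : L.BoundedFormula α n}
    (h : φ.IsQF) : φ.toFormula.IsQF := by
  induction h with
  | falsum => exact .falsum
  | of_isAtomic h =>
    cases h with
    | equal t₁ t₂ => exact .of_isAtomic (.equal _ _)
    | rel R ts => exact .of_isAtomic (.rel R _)
  | imp _ _ ih₁ ih₂ => exact ih₁.imp ih₂

namespace IsSigma1

variable {L : Language} {α β : Type} {m n : ℕ}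

theorem relabel {φ : L.BoundedFormula α m} (h : IsSigma1 φ) (f : α → β ⊕ Fin n) :
    IsSigma1 (φ.relabel f) := by
  induction h with
  | of_isQF h => exact .of_isQF (h.relabel f)
  | ex _ ih => simpa only [Language.BoundedFormula.relabel_ex] using ih.ex

theorem exs {φ : L.BoundedFormula α n} (h : IsSigma1 φ) : IsSigma1 φ.exs := by
  induction n with
  | zero => exact h
  | succ n ih => exact ih h.ex

theorem toFormula {φ : L.BoundedFormula α n} (h : IsSigma1 φ) : IsSigma1 φ.toFormula := by
  induction h with
  | of_isQF h => exact .of_isQF (isQF_toFormula h)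
  | ex _ ih => exact (ih.relabel _).ex

theorem realize_embedding {M N : Type*} [L.Structure M] [L.Structure N] (f : M ↪[L] N)
    {φ : L.BoundedFormula α n} (h : IsSigma1 φ) {v : α → M} {xs : Fin n → M}
    (hφ : φ.Realize v xs) : φ.Realize (f ∘ v) (f ∘ xs) := by
  induction h with
  | of_isQF h => exact (h.realize_embedding f).2 hφ
  | ex _ ih =>
    obtain ⟨x, hx⟩ := Language.BoundedFormula.realize_ex.1 hφ
    refine Language.BoundedFormula.realize_ex.2 ⟨f x, ?_⟩
    simpa only [Fin.comp_snoc] using ih hx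

theorem formula_realize_embedding {M N : Type*} [L.Structure M] [L.Structure N] (f : M ↪[L] N)
    {φ : L.Formula α} (h : IsSigma1 φ) {v : α → M} (hφ : φ.Realize v) : φ.Realize (f ∘ v) := by
  simpa only [Language.Formula.Realize, Subsingleton.elim _ default] using
    h.realize_embedding f hφ

theorem isSigma2 {φ : L.BoundedFormula α n} (h : IsSigma1 φ) : IsSigma2 φ := by
  induction h with
  | of_isQF h => exact .of_isPi1 (.of_isQF h)
  | ex _ ih => exact ih.ex

end IsSigma1

namespace IsPi1

variable {L : Language} {α β : Type} {m n : ℕ}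

theorem relabel {φ : L.BoundedFormula α m} (h : IsPi1 φ) (f : α → β ⊕ Fin n) :
    IsPi1 (φ.relabel f) := by
  induction h with
  | of_isQF h => exact .of_isQF (h.relabel f)
  | all _ ih => simpa only [Language.BoundedFormula.relabel_all] using ih.all

theorem alls {φ : L.BoundedFormula α n} (h : IsPi1 φ) : IsPi1 φ.alls := by
  induction n with
  | zero => exact h
  | succ n ih => exact ih h.all

theorem exists_isSigma1_not {φ : L.BoundedFormula α n} (h : IsPi1 φ) :
    ∃ ψ : L.BoundedFormula α n, IsSigma1 ψ ∧
      ∀ (M : Type*) [L.Structure M] (v : α → M) (xs : Fin n → M),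
        ψ.Realize v xs ↔ ¬φ.Realize v xs := by
  induction h with
  | @of_isQF n φ h => exact ⟨φ.not, .of_isQF h.not, fun M _ v xs => .rfl⟩
  | all _ ih =>
    obtain ⟨ψ, hψ, hiff⟩ := ih
    exact ⟨ψ.ex, hψ.ex, fun M _ v xs => by simp [hiff]⟩

end IsPi1

namespace IsSigma2

variable {L : Language} {α β : Type} {m n : ℕ}

theorem relabel {φ : L.BoundedFormula α m} (h : IsSigma2 φ) (f : α → β ⊕ Fin n) :
    IsSigma2 (φ.relabel f) := by
  induction h with
  | of_isPi1 h => exact .of_isPi1 (h.relabel f)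
  | ex _ ih => simpa only [Language.BoundedFormula.relabel_ex] using ih.ex

theorem exs {φ : L.BoundedFormula α n} (h : IsSigma2 φ) : IsSigma2 φ.exs := by
  induction n with
  | zero => exact h
  | succ n ih => exact ih h.ex

end IsSigma2

section QuantifyOn

variable {L : Language} {ι : Type} [Finite ι]

open Classical in
/-- The formula `∃ (xᵢ)_{i ∈ U}, φ`. All variables in `ι` remain formally available as free
variables, but those in `U` no longer occur. -/
noncomputable def exOn (U : Set ι) (φ : L.Formula ι) : L.Formula ι :=
  (φ.relabel fun i => if i ∈ U then Sum.inr i else Sum.inl i).iExs ι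

open Classical in
/-- The formula `∀ (xᵢ)_{i ∈ V}, φ`, with the same convention on free variables as `exOn`. -/
noncomputable def allOn (V : Set ι) (φ : L.Formula ι) : L.Formula ι :=
  (φ.relabel fun i => if i ∈ V then Sum.inr i else Sum.inl i).iAlls ι

open Classical in
theorem realize_exOn {M : Type*} [L.Structure M] {U : Set ι} {φ : L.Formula ι} {v : ι → M} :
    (exOn U φ).Realize v ↔ ∃ x : ι → M, φ.Realize (U.piecewise x v) := by
  have key : ∀ x : ι → M, (Sum.elim v x ∘ fun i => if i ∈ U then Sum.inr i else Sum.inl i) =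
      U.piecewise x v := fun x => by
    ext i; by_cases hi : i ∈ U <;> simp [hi]
  simp [exOn, key]

open Classical in
theorem realize_allOn {M : Type*} [L.Structure M] {V : Set ι} {φ : L.Formula ι} {v : ι → M} :
    (allOn V φ).Realize v ↔ ∀ x : ι → M, φ.Realize (V.piecewise x v) := by
  have key : ∀ x : ι → M, (Sum.elim v x ∘ fun i => if i ∈ V then Sum.inr i else Sum.inl i) =
      V.piecewise x v := fun x => by
    ext i; by_cases hi : i ∈ V <;> simp [hi]
  simp [allOn, key]

theorem IsSigma1.exOn {φ : L.Formula ι} (h : IsSigma1 φ) (U : Set ι) : IsSigma1 (exOn U φ) :=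
  ((h.relabel _).relabel _).exs

theorem IsSigma2.exOn {φ : L.Formula ι} (h : IsSigma2 φ) (U : Set ι) : IsSigma2 (exOn U φ) :=
  ((h.relabel _).relabel _).exs

theorem IsPi1.allOn {φ : L.Formula ι} (h : IsPi1 φ) (V : Set ι) : IsPi1 (allOn V φ) :=
  ((h.relabel _).relabel _).alls

end QuantifyOn

/-! ### Substructures of `ℛ₂` -/

section Dom

variable {le1 le2 : Ordinal → Ordinal → Prop} {D E : Set Ordinal}

/-- The substructure of `ℛ₂` with underlying set `D`. For an initial segment `Set.Iio β` it is,
definitionally, the structure `segStr le1 le2 β`. -/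
def Dom (_le1 _le2 : Ordinal → Ordinal → Prop) (D : Set Ordinal) : Type _ := D

namespace Dom

/-- The ordinal named by an element of the substructure with underlying set `D`. -/
def val (x : Dom le1 le2 D) : Ordinal := Subtype.val x

theorem val_mem (x : Dom le1 le2 D) : x.val ∈ D := Subtype.property x

/-- The element of the substructure with underlying set `D` named by an ordinal in `D`. -/
def mk (x : Ordinal) (hx : x ∈ D) : Dom le1 le2 D := ⟨x, hx⟩

theorem val_mk {x : Ordinal} (hx : x ∈ D) : (mk x hx : Dom le1 le2 D).val = x := rfl

instance : ordLang.Structure (Dom le1 le2 D) where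
  funMap := fun f => Empty.elim f
  RelMap
    | .le => fun v => (v 0).val ≤ (v 1).val
    | .le1 => fun v => le1 (v 0).val (v 1).val
    | .le2 => fun v => le2 (v 0).val (v 1).val

/-- The inclusion between two substructures of `ℛ₂`. -/
def incl (h : D ⊆ E) : Dom le1 le2 D ↪[ordLang] Dom le1 le2 E where
  toFun x := mk x.val (h x.val_mem)
  inj' := Set.inclusion_injective h
  map_fun' := fun f => Empty.elim f
  map_rel' := by rintro _ (_ | _ | _) _ <;> rfl

theorem incl_mk (h : D ⊆ E) {x : Ordinal} (hx : x ∈ D) :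
    incl h (mk x hx : Dom le1 le2 D) = mk x (h hx) := rfl

end Dom

/-- The relation `A` on tuples of ordinals is defined by one quantifier-free formula in all
substructures of `ℛ₂`. -/
def QFDef (le1 le2 : Ordinal → Ordinal → Prop) {ι : Type} (A : (ι → Ordinal) → Prop) : Prop :=
  ∃ φ : ordLang.Formula ι, φ.IsQF ∧
    ∀ (D : Set Ordinal) (w : ι → Dom le1 le2 D), φ.Realize w ↔ A fun i => (w i).val

namespace QFDef

variable {ι κ : Type} {A B : (ι → Ordinal) → Prop}

theorem of_relation {r : ordLang.Relations 2} {R : Ordinal → Ordinal → Prop}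
    (hR : ∀ (D : Set Ordinal) (x y : Dom le1 le2 D),
      Language.Structure.RelMap r ![x, y] ↔ R x.val y.val)
    (i j : ι) : QFDef le1 le2 fun w => R (w i) (w j) :=
  ⟨r.formula₂ (.var i) (.var j), .of_isAtomic (.rel _ _), fun D w => by
    rw [Language.Formula.realize_rel₂]
    exact hR D (w i) (w j)⟩

theorem of_le (i j : ι) : QFDef le1 le2 fun w => w i ≤ w j :=
  of_relation (r := ordRel.le) (fun _ _ _ => .rfl) i j

theorem of_le1 (i j : ι) : QFDef le1 le2 fun w => le1 (w i) (w j) :=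
  of_relation (r := ordRel.le1) (fun _ _ _ => .rfl) i j

theorem of_le2 (i j : ι) : QFDef le1 le2 fun w => le2 (w i) (w j) :=
  of_relation (r := ordRel.le2) (fun _ _ _ => .rfl) i j

theorem false : QFDef le1 le2 fun _ : ι → Ordinal => False :=
  ⟨⊥, .falsum, fun _ _ => .rfl⟩

theorem imp (hA : QFDef le1 le2 A) (hB : QFDef le1 le2 B) :
    QFDef le1 le2 fun w => A w → B w := by
  obtain ⟨φ, hφ, hφA⟩ := hA
  obtain ⟨ψ, hψ, hψB⟩ := hB
  exact ⟨φ.imp ψ, hφ.imp hψ, fun D w => by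
    rw [Language.Formula.realize_imp, hφA, hψB]⟩

theorem not (hA : QFDef le1 le2 A) : QFDef le1 le2 fun w => ¬A w := hA.imp false

theorem of_lt (i j : ι) : QFDef le1 le2 fun w => w i < w j := by
  simpa only [not_le] using (of_le j i).not

theorem and (hA : QFDef le1 le2 A) (hB : QFDef le1 le2 B) :
    QFDef le1 le2 fun w => A w ∧ B w := by
  simpa only [Classical.not_imp, not_not] using (hA.imp hB.not).not

theorem const (p : Prop) : QFDef le1 le2 fun _ : ι → Ordinal => p := by
  by_cases hp : p
  · simpa only [hp, not_false_eq_true] using (false (ι := ι)).not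
  · simpa only [hp] using false

theorem forall_finite [Finite κ] {A : κ → (ι → Ordinal) → Prop}
    (hA : ∀ k, QFDef le1 le2 (A k)) : QFDef le1 le2 fun w => ∀ k, A k w := by
  have := Fintype.ofFinite κ
  suffices ∀ s : Finset κ, QFDef le1 le2 fun w => ∀ k ∈ s, A k w by
    simpa using this Finset.univ
  intro s
  induction s using Finset.cons_induction with
  | empty => simpa using const True
  | cons k s _ ih => simpa using (hA k).and ih

end QFDef

end Dom

/-! ### Elementarity between initial segments -/

section ElemSub

variable {le1 le2 : Ordinal → Ordinal → Prop} {a b c : Ordinal}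

theorem ElemSub.realize_iff {C : ∀ k : ℕ, ordLang.Formula (Fin k) → Prop}
    (h : ElemSub C le1 le2 a b) (hab : a ≤ b) {α : Type} {k : ℕ} (e : α ≃ Fin k)
    {φ : ordLang.Formula α} (hφ : C k (φ.relabel e)) (v : α → Dom le1 le2 (Set.Iio a)) :
    φ.Realize v ↔ φ.Realize (Dom.incl (Set.Iio_subset_Iio hab) ∘ v) := by
  have key : (φ.relabel e).Realize (v ∘ e.symm) ↔
      (φ.relabel e).Realize (Dom.incl (Set.Iio_subset_Iio hab) ∘ v ∘ e.symm) :=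
    h.choose_spec k _ hφ (v ∘ e.symm)
  simpa only [Language.Formula.realize_relabel, Function.comp_assoc, Equiv.symm_comp_self,
    Function.comp_id] using key

theorem ElemSub.refl (C : ∀ k : ℕ, ordLang.Formula (Fin k) → Prop) (a : Ordinal) :
    ElemSub C le1 le2 a a :=
  ⟨le_rfl, fun _ _ _ _ => .rfl⟩

theorem ElemSub.trans {C : ∀ k : ℕ, ordLang.Formula (Fin k) → Prop}
    (hab : ElemSub C le1 le2 a b) (hbc : ElemSub C le1 le2 b c) : ElemSub C le1 le2 a c :=
  ⟨hab.1.trans hbc.1, fun k φ hφ _ => (hab.2 k φ hφ _).trans (hbc.2 k φ hφ _)⟩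

theorem IsSigma1.exists_lt_realize (ha : ∀ x < a, Order.succ x < a) {α : Type} {n : ℕ}
    {φ : ordLang.BoundedFormula α n} (hφ : IsSigma1 φ) (hba : b < a)
    {v : α → Dom le1 le2 (Set.Iio b)} {xs : Fin n → Dom le1 le2 (Set.Iio b)}
    (h : φ.Realize (Dom.incl (Set.Iio_subset_Iio hba.le) ∘ v)
      (Dom.incl (Set.Iio_subset_Iio hba.le) ∘ xs)) :
    ∃ (z : Ordinal) (hbz : b ≤ z), z < a ∧
      φ.Realize (Dom.incl (Set.Iio_subset_Iio hbz) ∘ v)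
        (Dom.incl (Set.Iio_subset_Iio hbz) ∘ xs) := by
  induction hφ generalizing b with
  | of_isQF hφ =>
    exact ⟨b, le_rfl, hba, (hφ.realize_embedding (Dom.incl _)).2
      ((hφ.realize_embedding (Dom.incl _)).1 h)⟩
  | ex _ ih =>
    obtain ⟨x, hx⟩ := Language.BoundedFormula.realize_ex.1 h
    have hlt : max b (Order.succ x.val) < a := max_lt hba (ha x.val x.val_mem)
    have hx' : x.val < max b (Order.succ x.val) := (Order.lt_succ _).trans_le (le_max_right _ _)
    let f := Dom.incl (le1 := le1) (le2 := le2)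
      (Set.Iio_subset_Iio (le_max_left b (Order.succ x.val)))
    obtain ⟨z, hbz, hza, hz⟩ := ih hlt (v := f ∘ v) (xs := Fin.snoc (f ∘ xs) (.mk x.val hx')) (by
      rw [Fin.comp_snoc]
      exact hx)
    rw [Fin.comp_snoc] at hz
    exact ⟨z, (le_max_left _ _).trans hbz, hza, Language.BoundedFormula.realize_ex.2 ⟨_, hz⟩⟩

theorem IsSigma1.formula_exists_lt_realize (ha : ∀ x < a, Order.succ x < a) {α : Type}
    {φ : ordLang.Formula α} (hφ : IsSigma1 φ) (hba : b < a) {v : α → Dom le1 le2 (Set.Iio b)}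
    (h : φ.Realize (Dom.incl (Set.Iio_subset_Iio hba.le) ∘ v)) :
    ∃ (z : Ordinal) (hbz : b ≤ z), z < a ∧ φ.Realize (Dom.incl (Set.Iio_subset_Iio hbz) ∘ v) := by
  have key := hφ.exists_lt_realize ha hba (v := v) (xs := default)
  simp only [Subsingleton.elim _ default] at key
  exact key h

namespace IsR2Pair

theorem le_of_le1 (h : IsR2Pair le1 le2) (hab : le1 a b) : a ≤ b := ((h.1 a b).1 hab).1

theorem le1_refl (h : IsR2Pair le1 le2) (a : Ordinal) : le1 a a := (h.1 a a).2 (.refl _ a)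

theorem le2_refl (h : IsR2Pair le1 le2) (a : Ordinal) : le2 a a := (h.2 a a).2 (.refl _ a)

theorem le1_trans (h : IsR2Pair le1 le2) (hab : le1 a b) (hbc : le1 b c) : le1 a c :=
  (h.1 a c).2 (((h.1 a b).1 hab).trans ((h.1 b c).1 hbc))

theorem le2_trans (h : IsR2Pair le1 le2) (hab : le2 a b) (hbc : le2 b c) : le2 a c :=
  (h.2 a c).2 (((h.2 a b).1 hab).trans ((h.2 b c).1 hbc))

theorem le1_of_le2 (h : IsR2Pair le1 le2) (hab : le2 a b) : le1 a b := by
  obtain ⟨hle, hiff⟩ := (h.2 a b).1 hab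
  exact (h.1 a b).2 ⟨hle, fun k φ hφ => hiff k φ hφ.isSigma2⟩

theorem le_of_le2 (h : IsR2Pair le1 le2) (hab : le2 a b) : a ≤ b := ((h.2 a b).1 hab).1

theorem realize_iff_of_le1 (h : IsR2Pair le1 le2) (hab : le1 a b) {α : Type} [Finite α]
    {φ : ordLang.Formula α} (hφ : IsSigma1 φ) (v : α → Dom le1 le2 (Set.Iio a)) :
    φ.Realize v ↔ φ.Realize (Dom.incl (Set.Iio_subset_Iio (h.le_of_le1 hab)) ∘ v) :=
  ((h.1 a b).1 hab).realize_iff (h.le_of_le1 hab) (Finite.equivFin α) (hφ.relabel _) v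

theorem realize_iff_of_le2 (h : IsR2Pair le1 le2) (hab : le2 a b) {α : Type} [Finite α]
    {φ : ordLang.Formula α} (hφ : IsSigma2 φ) (v : α → Dom le1 le2 (Set.Iio a)) :
    φ.Realize v ↔ φ.Realize (Dom.incl (Set.Iio_subset_Iio (h.le_of_le2 hab)) ∘ v) :=
  ((h.2 a b).1 hab).realize_iff (h.le_of_le2 hab) (Finite.equivFin α) (hφ.relabel _) v

theorem le1_of_realize (h : IsR2Pair le1 le2) (hab : a ≤ b)
    (hba : ∀ (k : ℕ) (φ : ordLang.Formula (Fin k)), IsSigma1 φ →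
      ∀ v : Fin k → Dom le1 le2 (Set.Iio a),
        φ.Realize (Dom.incl (Set.Iio_subset_Iio hab) ∘ v) → φ.Realize v) : le1 a b :=
  (h.1 a b).2 ⟨hab, fun k φ hφ v =>
    ⟨hφ.formula_realize_embedding (Dom.incl (Set.Iio_subset_Iio hab)), hba k φ hφ v⟩⟩

theorem le1_of_le_of_le (h : IsR2Pair le1 le2) (hab : a ≤ b) (hbc : b ≤ c) (hac : le1 a c) :
    le1 a b :=
  h.le1_of_realize hab fun _ _ hφ v hv => (h.realize_iff_of_le1 hac hφ v).2 <|
    hφ.formula_realize_embedding (Dom.incl (Set.Iio_subset_Iio hbc)) hv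

/-- The finitely many witnesses of a `Σ₁`-formula in the limit `a` already lie below some
`z < a`. -/
theorem le1_of_forall_lt (h : IsR2Pair le1 le2) (ha : ∀ x < a, Order.succ x < a) (hba : b ≤ a)
    (hb : ∀ z, b ≤ z → z < a → le1 b z) : le1 b a := by
  rcases hba.eq_or_lt with rfl | hlt
  · exact h.le1_refl b
  refine h.le1_of_realize hba fun k φ hφ v hv => ?_
  obtain ⟨z, hbz, hza, hz⟩ := hφ.formula_exists_lt_realize ha hlt hv
  exact (h.realize_iff_of_le1 (hb z hbz hza) hφ v).2 hz

theorem realize_of_isPi1 (h : IsR2Pair le1 le2) (hab : le1 a b) {α : Type} [Finite α] {n : ℕ}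
    {φ : ordLang.BoundedFormula α n} (hφ : IsPi1 φ) {v : α → Dom le1 le2 (Set.Iio a)}
    {xs : Fin n → Dom le1 le2 (Set.Iio a)} (hv : φ.Realize v xs) :
    φ.Realize (Dom.incl (Set.Iio_subset_Iio (h.le_of_le1 hab)) ∘ v)
      (Dom.incl (Set.Iio_subset_Iio (h.le_of_le1 hab)) ∘ xs) := by
  obtain ⟨ψ, hψ, hiff⟩ := hφ.exists_isSigma1_not
  by_contra hcon
  refine (hiff _ v xs).1 ?_ hv
  have key := (h.realize_iff_of_le1 hab hψ.toFormula (Sum.elim v xs)).2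
  rw [Language.BoundedFormula.realize_toFormula, Language.BoundedFormula.realize_toFormula] at key
  exact key ((hiff _ _ _).2 hcon)

theorem realize_of_isSigma2 (h : IsR2Pair le1 le2) (hab : le1 a b) {α : Type} [Finite α] {n : ℕ}
    {φ : ordLang.BoundedFormula α n} (hφ : IsSigma2 φ) {v : α → Dom le1 le2 (Set.Iio a)}
    {xs : Fin n → Dom le1 le2 (Set.Iio a)} (hv : φ.Realize v xs) :
    φ.Realize (Dom.incl (Set.Iio_subset_Iio (h.le_of_le1 hab)) ∘ v)
      (Dom.incl (Set.Iio_subset_Iio (h.le_of_le1 hab)) ∘ xs) := by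
  induction hφ with
  | of_isPi1 hφ => exact h.realize_of_isPi1 hab hφ hv
  | ex _ ih =>
    obtain ⟨x, hx⟩ := Language.BoundedFormula.realize_ex.1 hv
    refine Language.BoundedFormula.realize_ex.2
      ⟨Dom.incl (Set.Iio_subset_Iio (h.le_of_le1 hab)) x, ?_⟩
    simpa only [Fin.comp_snoc] using ih hx

theorem formula_realize_of_isSigma2 (h : IsR2Pair le1 le2) (hab : le1 a b) {α : Type} [Finite α]
    {φ : ordLang.Formula α} (hφ : IsSigma2 φ) {v : α → Dom le1 le2 (Set.Iio a)}
    (hv : φ.Realize v) : φ.Realize (Dom.incl (Set.Iio_subset_Iio (h.le_of_le1 hab)) ∘ v) := by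
  simpa only [Language.Formula.Realize, Subsingleton.elim _ default] using
    h.realize_of_isSigma2 hab hφ hv

theorem le2_of_le1_of_le1 (h : IsR2Pair le1 le2) (hab : le1 a b) (hbc : le1 b c)
    (hac : le2 a c) : le2 a b := by
  refine (h.2 a b).2 ⟨h.le_of_le1 hab, fun k φ hφ v =>
    ⟨h.formula_realize_of_isSigma2 hab hφ, fun hv => (h.realize_iff_of_le2 hac hφ v).2 ?_⟩⟩
  exact h.formula_realize_of_isSigma2 hbc hφ hv

theorem pos_of_le1 (h : IsR2Pair le1 le2) (hab : le1 a b) (hlt : a < b) : 0 < a := by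
  let φ : ordLang.Formula (Fin 0) := (⊤ : ordLang.BoundedFormula (Fin 0) 1).ex
  have hφ : IsSigma1 φ := .ex (.of_isQF .top)
  have hb : φ.Realize (Dom.incl (Set.Iio_subset_Iio hlt.le) ∘
      (Fin.elim0 : Fin 0 → Dom le1 le2 (Set.Iio a))) :=
    Language.BoundedFormula.realize_ex.2 ⟨.mk a hlt, Language.BoundedFormula.realize_top.2 trivial⟩
  obtain ⟨x, -⟩ := Language.BoundedFormula.realize_ex.1 ((h.realize_iff_of_le1 hab hφ _).2 hb)
  exact x.val_mem.bot_lt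

open Classical in
theorem reflect_of_le1 (h : IsR2Pair le1 le2) (hab : le1 a b) {ι : Type} [Finite ι]
    {A : (ι → Ordinal) → Prop} (hA : QFDef le1 le2 A) {U : Set ι} {g : ι → Ordinal}
    (hgU : ∀ i ∈ U, g i < b) (hg : ∀ i ∉ U, g i < a) (hAg : A g) :
    ∃ y, Set.EqOn y g Uᶜ ∧ (∀ i ∈ U, y i < a) ∧ A y := by
  have hle := h.le_of_le1 hab
  rcases hle.eq_or_lt with rfl | hlt
  · exact ⟨g, fun _ _ => rfl, hgU, hAg⟩
  obtain ⟨φ, hφ, hφA⟩ := hA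
  have hv : ∀ i, U.piecewise 0 g i < a := fun i => by
    by_cases hi : i ∈ U <;> simp [hi, hg, h.pos_of_le1 hab hlt]
  have hgb : ∀ i, g i ∈ Set.Iio b := fun i =>
    if hi : i ∈ U then hgU i hi else (hg i hi).trans_le hle
  let v : ι → Dom le1 le2 (Set.Iio a) := fun i => .mk _ (hv i)
  have hb : (exOn U φ).Realize (Dom.incl (Set.Iio_subset_Iio hle) ∘ v) := by
    refine realize_exOn.2 ⟨fun i => .mk (g i) (hgb i), (hφA _ _).2 ?_⟩
    convert hAg using 2 with i
    by_cases hi : i ∈ U <;> simp [hi, v, Dom.incl_mk, Dom.val_mk]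
  obtain ⟨x, hx⟩ := realize_exOn.1 <|
    (h.realize_iff_of_le1 hab ((IsSigma1.of_isQF hφ).exOn U) v).2 hb
  refine ⟨fun i => (U.piecewise x v i).val, fun i hi => ?_, fun i _ => Dom.val_mem _,
    (hφA _ _).1 hx⟩
  simp [Set.piecewise_eq_of_notMem _ _ _ hi, v, Dom.val_mk]

open Classical in
/-- The formula reflected from `b` to `a` is `∃ U ∀ V, A`; the entries of `g` outside `U ∪ V` are
its parameters. -/
theorem reflect_of_le2 (h : IsR2Pair le1 le2) (hab : le2 a b) {ι : Type} [Finite ι]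
    {A : (ι → Ordinal) → Prop} (hA : QFDef le1 le2 A) {U V : Set ι}
    {g : ι → Ordinal} (hgU : ∀ i ∈ U, g i < b) (hg : ∀ i ∉ U, i ∉ V → g i < a)
    (hAg : ∀ z, Set.EqOn z g Vᶜ → (∀ i ∈ V, z i < b) → A z) :
    ∃ y, Set.EqOn y g Uᶜ ∧ (∀ i ∈ U, y i < a) ∧
      ∀ z, Set.EqOn z y Vᶜ → (∀ i ∈ V, z i < a) → A z := by
  have hle := h.le_of_le2 hab
  rcases hle.eq_or_lt with rfl | hlt
  · exact ⟨g, fun _ _ => rfl, hgU, hAg⟩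
  obtain ⟨φ, hφ, hφA⟩ := hA
  have ha := h.pos_of_le1 (h.le1_of_le2 hab) hlt
  have hv : ∀ i, (U ∪ V).piecewise 0 g i < a := fun i => by
    by_cases hiU : i ∈ U <;> by_cases hiV : i ∈ V <;> simp [Set.piecewise, hiU, hiV, hg, ha]
  have hgb : ∀ i, V.piecewise 0 g i < b := fun i => by
    by_cases hiV : i ∈ V <;> by_cases hiU : i ∈ U <;>
      simp [hiU, hiV, hgU, (hg i · · |>.trans hlt), ha.trans hlt]
  let v : ι → Dom le1 le2 (Set.Iio a) := fun i => .mk _ (hv i)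
  have hb : (exOn U (allOn V φ)).Realize (Dom.incl (Set.Iio_subset_Iio hle) ∘ v) := by
    refine realize_exOn.2 ⟨fun i => .mk _ (hgb i), realize_allOn.2 fun z => (hφA _ _).2 <|
      hAg _ (fun i hi => ?_) fun i _ => Dom.val_mem _⟩
    by_cases hiU : i ∈ U <;>
      simp_all [Set.piecewise, v, Dom.incl_mk, Dom.val_mk]
  obtain ⟨x, hx⟩ := realize_exOn.1 <|
    (h.realize_iff_of_le2 hab ((IsSigma2.of_isPi1 ((IsPi1.of_isQF hφ).allOn V)).exOn U) v).2 hb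
  refine ⟨U.piecewise (fun i => (x i).val) g, U.piecewise_eqOn_compl _ _, fun i hi => ?_,
    fun z hz hzV => ?_⟩
  · simpa [hi] using (x i).val_mem
  let z' : ι → Dom le1 le2 (Set.Iio a) :=
    fun i => if hi : i ∈ V then .mk (z i) (Set.mem_Iio.2 (hzV i hi)) else .mk 0 ha
  convert (hφA _ _).1 (realize_allOn.1 hx z') using 2 with i
  by_cases hiV : i ∈ V
  · simp [hiV, z', Dom.val_mk]
  · rw [hz hiV]
    by_cases hiU : i ∈ U <;> simp [Set.piecewise, hiU, hiV, v, Dom.val_mk]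

theorem succ_lt_of_le1 (h : IsR2Pair le1 le2) (hab : le1 a b) (hlt : a < b) {x : Ordinal}
    (hx : x < a) : Order.succ x < a := by
  obtain ⟨y, hyx, hya, hy⟩ := h.reflect_of_le1 hab (QFDef.of_lt false true) (U := {true})
    (g := fun i => cond i a x) (by simpa) (by simpa) (by simpa)
  have hxy : x = y false := (hyx (x := false) (by simp)).symm
  exact (Order.succ_le_of_lt (hxy ▸ hy)).trans_lt (hya true rfl)

end IsR2Pair

end ElemSub

/-! ### Chains for `≤₂` -/

section Chain

universe u

theorem exists_closed_gt {I : Type*} [Small.{u} I] {n : I → ℕ}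
    (f : ∀ i, (Fin (n i) → Ordinal.{u}) → Ordinal.{u}) (γ : Ordinal.{u}) :
    ∃ δ > γ, ∀ i (x : Fin (n i) → Ordinal.{u}), (∀ j, x j < δ) → f i x < δ := by
  let N : Ordinal.{u} → Ordinal.{u} := fun δ => max (Order.succ δ)
    (⨆ p : Σ i, Fin (n i) → Set.Iio δ, Order.succ (f p.1 fun j => p.2 j))
  have hN : ∀ δ, δ < N δ := fun δ => (Order.lt_succ δ).trans_le (le_max_left _ _)
  have hf : ∀ δ i (x : Fin (n i) → Ordinal.{u}), (∀ j, x j < δ) → f i x < N δ := by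
    intro δ i x hx
    refine (Order.lt_succ _).trans_le ((?_ : _ ≤ _).trans (le_max_right _ _))
    exact Ordinal.le_iSup (fun p : Σ i, Fin (n i) → Set.Iio δ =>
      Order.succ (f p.1 fun j => p.2 j)) ⟨i, fun j => ⟨x j, hx j⟩⟩
  have hmono : Monotone fun k => N^[k] γ := fun _ _ hkl =>
    Function.monotone_iterate_of_id_le (fun δ => (hN δ).le) hkl γ
  refine ⟨Ordinal.nfp N γ, (hN γ).trans_le (Ordinal.iterate_le_nfp N γ 1), fun i x hx => ?_⟩
  choose k hk using fun j => Ordinal.lt_nfp_iff.1 (hx j)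
  refine (hf (N^[Finset.univ.sup k] γ) i x fun j => (hk j).trans_le
    (hmono (Finset.le_sup (Finset.mem_univ j)))).trans_le ?_
  rw [← Function.iterate_succ_apply' N]
  exact Ordinal.iterate_le_nfp N γ _

variable {le1 le2 : Ordinal.{u} → Ordinal.{u} → Prop}

/-- The initial segment below `δ` is closed under Skolem functions for `ℛ₂`, as in the
Tarski-Vaught test. -/
def SkolemClosed (le1 le2 : Ordinal.{u} → Ordinal.{u} → Prop) (δ : Ordinal.{u}) : Prop :=
  ∀ (n : ℕ) (φ : ordLang.BoundedFormula Empty (n + 1)) (x : Fin n → Dom le1 le2 Set.univ),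
    (∀ j, (x j).val < δ) → (∃ y, φ.Realize default (Fin.snoc x y)) →
      ∃ y, y.val < δ ∧ φ.Realize default (Fin.snoc x y)

theorem exists_skolemClosed_gt (γ : Ordinal.{u}) : ∃ δ > γ, SkolemClosed le1 le2 δ := by
  let f (p : Σ n, ordLang.BoundedFormula Empty (n + 1)) (x : Fin p.1 → Ordinal.{u}) :
      Ordinal.{u} :=
    sInf {y | p.2.Realize (M := Dom le1 le2 Set.univ) default
      (Fin.snoc (fun j => .mk (x j) trivial) (.mk y trivial))}
  obtain ⟨δ, hγδ, hδ⟩ := exists_closed_gt f γ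
  refine ⟨δ, hγδ, fun n φ x hx ⟨y, hy⟩ =>
    ⟨.mk (f ⟨n, φ⟩ fun j => (x j).val) trivial, hδ _ _ hx, ?_⟩⟩
  exact csInf_mem (s := {y | φ.Realize (M := Dom le1 le2 Set.univ) default
    (Fin.snoc (fun j => .mk (x j).val trivial) (.mk y trivial))}) ⟨y.val, hy⟩

theorem SkolemClosed.realize_iff {δ : Ordinal.{u}} (hδ : SkolemClosed le1 le2 δ) {k : ℕ}
    (φ : ordLang.Formula (Fin k)) (v : Fin k → Dom le1 le2 (Set.Iio δ)) :
    φ.Realize (Dom.incl (Set.subset_univ _) ∘ v) ↔ φ.Realize v := by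
  refine Language.Embedding.isElementary_of_exists (Dom.incl (Set.subset_univ _))
    (fun n ψ x y hy => ?_) φ v
  obtain ⟨z, hz, hzψ⟩ := hδ n ψ (Dom.incl (Set.subset_univ _) ∘ x) (fun j => (x j).val_mem) ⟨y, hy⟩
  exact ⟨.mk z.val hz, hzψ⟩

theorem IsR2Pair.le2_of_skolemClosed (h : IsR2Pair le1 le2) {δ ε : Ordinal.{u}} (hδε : δ ≤ ε)
    (hδ : SkolemClosed le1 le2 δ) (hε : SkolemClosed le1 le2 ε) : le2 δ ε :=
  (h.2 δ ε).2 ⟨hδε, fun _ φ _ v => (hδ.realize_iff φ v).symm.trans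
    (hε.realize_iff φ (Dom.incl (Set.Iio_subset_Iio hδε) ∘ v))⟩

theorem IsR2Pair.exists_strictMono_le2 (h : IsR2Pair le1 le2) :
    ∃ β : ℕ → Ordinal.{u}, StrictMono β ∧ ∀ i j, i ≤ j → le2 (β i) (β j) := by
  choose next hnext hclosed using exists_skolemClosed_gt (le1 := le1) (le2 := le2)
  have hβ : StrictMono fun k => next^[k + 1] 0 := strictMono_nat_of_lt_succ fun k => by
    rw [Function.iterate_succ_apply' next (k + 1)]
    exact hnext _
  have hβ' : ∀ k, SkolemClosed le1 le2 (next^[k + 1] 0) := fun k => by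
    rw [Function.iterate_succ_apply']
    exact hclosed _
  exact ⟨_, hβ, fun i j hij => h.le2_of_skolemClosed (hβ.monotone hij) (hβ' i) (hβ' j)⟩

theorem IsR2Pair.exists_chain_lt_oneInfty (h : IsR2Pair le1 le2) (n : ℕ) :
    ∃ β : Fin n → Ordinal.{u}, (∀ i j, i < j → β i < β j ∧ le2 (β i) (β j)) ∧
      ∀ i, β i < OneInfty le2 := by
  obtain ⟨γ, hγ, hγ2⟩ := h.exists_strictMono_le2
  have hne : {ν : Ordinal.{u} | ∀ n : ℕ, ∃ β : Fin n → Ordinal, (∀ i, β i < ν) ∧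
      ∀ (i : ℕ) (hi : i + 1 < n),
        Lt2 le2 (β ⟨i, Nat.lt_of_succ_lt hi⟩) (β ⟨i + 1, hi⟩)}.Nonempty :=
    ⟨⨆ k, Order.succ (γ k), fun n => ⟨fun i => γ i,
      fun i => (Order.lt_succ _).trans_le (Ordinal.le_iSup (fun k => Order.succ (γ k)) _),
      fun i _ => ⟨hγ2 _ _ i.le_succ, (hγ i.lt_succ_self).ne⟩⟩⟩
  obtain ⟨β, hβlt, hβ⟩ := csInf_mem hne n
  refine ⟨β, ?_, hβlt⟩
  cases n with
  | zero => exact fun i => i.elim0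
  | succ n =>
    have : IsTrans Ordinal.{u} fun x y => x < y ∧ le2 x y :=
      ⟨fun _ _ _ hxy hyz => ⟨hxy.1.trans hyz.1, h.le2_trans hxy.2 hyz.2⟩⟩
    refine (Fin.liftFun_iff_succ fun x y => x < y ∧ le2 x y).2 fun i => ?_
    obtain ⟨hle, hne⟩ := hβ i (Nat.succ_lt_succ i.2)
    exact ⟨(h.le_of_le2 hle).lt_of_ne hne, hle⟩

end Chain

/-! ### Coverings and reflection -/

namespace RForest

variable {F : RForest}

noncomputable instance : LinearOrder F.P where
  le := F.le0
  le_refl := F.le0_refl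
  le_trans := F.le0_trans
  le_antisymm := F.le0_antisymm
  le_total := F.le0_total
  toDecidableLE := Classical.decRel _

theorem le_of_le1 {p q : F.P} (hpq : F.le1 p q) : p ≤ q := F.le1_sub_le0 p q hpq

theorem le1_of_le_of_le {p q r : F.P} (hpq : p ≤ q) (hqr : q ≤ r) (hpr : F.le1 p r) :
    F.le1 p q :=
  F.respects1 p q r hpq hqr hpr

end RForest

section Covering

variable {le1 le2 : Ordinal → Ordinal → Prop} {F : RForest} {S T U V W : Set F.P}
  {c d : F.P → Ordinal} {a b : Ordinal} {p q : F.P}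

/-- `c` is a covering into `ℛ₂` of the subforest of `F` with underlying set `W`. -/
def CoversOn (le1 le2 : Ordinal → Ordinal → Prop) (F : RForest) (W : Set F.P)
    (c : F.P → Ordinal) : Prop :=
  ∀ x ∈ W, ∀ y ∈ W, x < y →
    c x < c y ∧ (F.le1 x y → le1 (c x) (c y)) ∧ (F.le2 x y → le2 (c x) (c y))

namespace CoversOn

theorem mono (hc : CoversOn le1 le2 F T c) (hST : S ⊆ T) : CoversOn le1 le2 F S c :=
  fun x hx y hy => hc x (hST hx) y (hST hy)

theorem congr (hc : CoversOn le1 le2 F S c) (hcd : Set.EqOn d c S) : CoversOn le1 le2 F S d :=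
  fun x hx y hy hxy => by
    rw [hcd hx, hcd hy]
    exact hc x hx y hy hxy

theorem isCovering (h : IsR2Pair le1 le2) (hc : CoversOn le1 le2 F Set.univ c) :
    IsCovering le1 le2 F c := by
  have hmono : StrictMono c := fun x y hxy => (hc x trivial y trivial hxy).1
  refine ⟨fun p q => hmono.le_iff_le.symm, fun p q hpq => ?_, fun p q hpq => ?_⟩
  · rcases (F.le_of_le1 hpq).eq_or_lt with rfl | hlt
    · exact h.le1_refl _
    · exact (hc p trivial q trivial hlt).2.1 hpq
  · rcases (F.le_of_le1 (F.le2_sub_le1 p q hpq)).eq_or_lt with rfl | hlt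
    · exact h.le2_refl _
    · exact (hc p trivial q trivial hlt).2.2 hpq

theorem qfDef {ι : Type} (W : Set F.P) (f : F.P → ι) :
    QFDef le1 le2 fun w => CoversOn le1 le2 F W (w ∘ f) :=
  .forall_finite fun x => (QFDef.const (x ∈ W)).imp <| .forall_finite fun y =>
    (QFDef.const (y ∈ W)).imp <| (QFDef.const (x < y)).imp <|
      (QFDef.of_lt (f x) (f y)).and <|
        ((QFDef.const (F.le1 x y)).imp (.of_le1 (f x) (f y))).and <|
          (QFDef.const (F.le2 x y)).imp (.of_le2 (f x) (f y))

end CoversOn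

theorem IsCovering.strictMono (hc : IsCovering le1 le2 F c) : StrictMono c :=
  strictMono_of_le_iff_le hc.1

theorem IsCovering.coversOn (hc : IsCovering le1 le2 F c) (W : Set F.P) :
    CoversOn le1 le2 F W c :=
  fun x _ y _ hxy => ⟨hc.strictMono hxy, hc.2.1 x y, hc.2.2 x y⟩

namespace CoversOn

open Classical in
theorem reflect_of_le1 (h : IsR2Pair le1 le2) (hab : le1 a b) (hc : CoversOn le1 le2 F W c)
    (hcU : ∀ x ∈ U, c x < b) (hcW : ∀ x ∈ W, x ∉ U → c x < a) :
    ∃ y, Set.EqOn y c Uᶜ ∧ (∀ x ∈ U, y x < a) ∧ CoversOn le1 le2 F W y := by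
  rcases U.eq_empty_or_nonempty with rfl | ⟨u, hu⟩
  · exact ⟨c, fun _ _ => rfl, by simp, hc⟩
  have hb : 0 < b := bot_le.trans_lt (hcU u hu)
  -- Points outside `U ∪ W` are irrelevant; they are moved together with `U`, starting from `0`.
  have hgU : ∀ x ∈ U ∪ Wᶜ, (U ∪ W).piecewise c 0 x < b := fun x hx => by
    by_cases hxU : x ∈ U
    · simpa [hxU] using hcU x hxU
    · have hxW : x ∉ W := by simpa [hxU] using hx
      simpa [hxU, hxW] using hb
  have hgW : ∀ x ∉ U ∪ Wᶜ, (U ∪ W).piecewise c 0 x < a := fun x hx => by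
    obtain ⟨hxU, hxW⟩ : x ∉ U ∧ x ∈ W := by simpa using hx
    simpa [hxW] using hcW x hxW hxU
  obtain ⟨y, hyc, hya, hy⟩ := h.reflect_of_le1 hab (CoversOn.qfDef (F := F) W id) hgU hgW
    (hc.congr fun x hx => by simp [hx])
  refine ⟨U.piecewise y c, U.piecewise_eqOn_compl _ _, fun x hx => ?_, hy.congr fun x hx => ?_⟩
  · simpa [hx] using hya x (.inl hx)
  · by_cases hxU : x ∈ U
    · simp [hxU]
    · have := hyc (x := x) (by simp [hxU, hx])
      simp_all

open Classical in
theorem reflect_of_le2 (h : IsR2Pair le1 le2) (hab : le2 a b) (hlt : a < b)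
    (hSV : Disjoint S V) (hUS : U ⊆ S) (hc : CoversOn le1 le2 F S c)
    (hcU : ∀ x ∈ U, c x < b) (hcS : ∀ x ∈ S, x ∉ U → c x < a)
    (hno : ∀ z, Set.EqOn z c S → (∀ x ∈ V, z x < b) → ¬CoversOn le1 le2 F (S ∪ V) z) :
    ∃ y, Set.EqOn y c Uᶜ ∧ (∀ x ∈ U, y x < a) ∧ CoversOn le1 le2 F S y ∧
      (∀ x ∈ U, le1 (c x) b → le1 (y x) a) ∧
      ∀ z, Set.EqOn z y S → (∀ x ∈ V, z x < a) → ¬CoversOn le1 le2 F (S ∪ V) z := by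
  have hab1 := h.le1_of_le2 hab
  have ha : 0 < a := h.pos_of_le1 hab1 hlt
  -- The extra variable `none` ranges over the ordinals below `b`: `le1 (c u) b` holds iff
  -- `le1 (c u) t` does for all `t` in `[c u, b)`, which is a universal statement inside `b`.
  let A : (Option F.P → Ordinal) → Prop := fun w => CoversOn le1 le2 F S (w ∘ some) ∧
    (∀ u, u ∈ U → le1 (c u) b → w (some u) ≤ w none → le1 (w (some u)) (w none)) ∧
    ¬CoversOn le1 le2 F (S ∪ V) (w ∘ some)
  have hA : QFDef le1 le2 A := (CoversOn.qfDef S some).and <| .and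
    (.forall_finite fun u => (QFDef.const _).imp <| (QFDef.const _).imp <|
      (QFDef.of_le (some u) none).imp (.of_le1 (some u) none))
    (CoversOn.qfDef (S ∪ V) some).not
  obtain ⟨y, hyc, hya, hy⟩ := h.reflect_of_le2 hab hA (U := some '' U)
    (V := insert none (some '' Sᶜ)) (g := fun o => o.elim 0 c) (by simpa using hcU)
    (by rintro (_ | x) hxU hxV <;> simp_all) fun z hzc hzb => by
      have hz : Set.EqOn (z ∘ some) c S := fun x hx => hzc (by simp [hx])
      refine ⟨hc.congr hz, fun u hu hub hut => ?_,
        hno _ hz fun x hx => hzb _ (by simpa using hSV.notMem_of_mem_right hx)⟩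
      have hzu : z (some u) = c u := hz (hUS hu)
      rw [hzu] at hut ⊢
      exact h.le1_of_le_of_le hut (hzb none (by simp)).le hub
  have hyS {w : F.P → Ordinal} {t : Ordinal} (ht : t < a) (hwy : Set.EqOn w (y ∘ some) S)
      (hwa : ∀ x ∉ S, w x < a) : A fun o => o.elim t w :=
    hy _ (by rintro (_ | x) hx <;> simp_all [Set.EqOn]) (by simpa using ⟨ht, hwa⟩)
  have hyU : ∀ x ∉ U, y (some x) = c x := fun x hx => hyc (by simpa using hx)
  have hy0 {t : Ordinal} (ht : t < a) := hyS (w := S.piecewise (y ∘ some) 0) ht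
    (S.piecewise_eqOn _ _) fun x hx => by simpa [hx] using ha
  refine ⟨y ∘ some, hyU, by simpa using hya, (hy0 ha).1.congr (S.piecewise_eqOn _ _).symm,
    fun u hu hub => h.le1_of_forall_lt (fun x => h.succ_lt_of_le1 hab1 hlt) (hya _ ⟨u, hu, rfl⟩).le
      fun t hut hta => ?_, fun z hzy hza hz => ?_⟩
  · simpa [A, hUS hu, hut] using (hy0 hta).2.1 u hu hub (by simpa [hUS hu] using hut)
  · refine (hyS (w := (S ∪ V).piecewise z 0) ha (fun x hx => ?_) fun x hx => ?_).2.2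
      (hz.congr ((S ∪ V).piecewise_eqOn _ _))
    · simpa [hx] using hzy hx
    · by_cases hxV : x ∈ V
      · simpa [hxV] using hza x hxV
      · simpa [hx, hxV] using ha

end CoversOn

theorem IsCovering.of_lowerClosure (h : IsR2Pair le1 le2) (hc : IsCovering le1 le2 F c)
    (hU : ∀ u ∈ U, ∀ x ∉ U, ¬F.le1 u x) (hdc : Set.EqOn d c Uᶜ) (hdU : ∀ u ∈ U, d u ≤ c u)
    (hd : CoversOn le1 le2 F (lowerClosure U) d) : IsCovering le1 le2 F d := by
  refine CoversOn.isCovering h fun x _ y _ hxy => ?_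
  by_cases hy : y ∈ lowerClosure U
  · exact hd x ((lowerClosure U).lower hxy.le hy) y hy hxy
  have hyU : y ∉ U := fun hyU => hy (subset_lowerClosure hyU)
  have key := hc.coversOn Set.univ x trivial y trivial hxy
  rw [hdc hyU]
  by_cases hx : x ∈ U
  · exact ⟨(hdU x hx).trans_lt key.1, fun hle => (hU x hx y hyU hle).elim,
      fun hle => (hU x hx y hyU (F.le2_sub_le1 x y hle)).elim⟩
  · rwa [hdc hx]

/-- Reflecting `d` from `b` to `a` would give a covering strictly below `c` on `U`. -/
theorem false_of_minimal_of_le1 (h : IsR2Pair le1 le2) (hc : Minimal (IsCovering le1 le2 F) c)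
    (hab : le1 a b) (hUne : U.Nonempty) (hU : ∀ u ∈ U, ∀ x ∉ U, ¬F.le1 u x)
    (hdc : Set.EqOn d c Uᶜ) (hdb : ∀ u ∈ U, d u < b) (hac : ∀ u ∈ U, a ≤ c u)
    (hlt : ∀ x ∉ U, ∀ u ∈ U, x < u → c x < a) (hd : CoversOn le1 le2 F (lowerClosure U) d) :
    False := by
  obtain ⟨y, hyd, hya, hy⟩ := hd.reflect_of_le1 h hab hdb fun x hx hxU => by
    obtain ⟨u, hu, hxu⟩ := mem_lowerClosure.1 hx
    rw [hdc hxU]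
    exact hlt x hxU u hu (hxu.lt_of_ne fun hxu => hxU (hxu ▸ hu))
  have hyc : ∀ u ∈ U, y u < c u := fun u hu => (hya u hu).trans_le (hac u hu)
  have hyc' : Set.EqOn y c Uᶜ := hyd.trans hdc
  have hle : y ≤ c := fun x => by
    by_cases hx : x ∈ U
    exacts [(hyc x hx).le, (hyc' hx).le]
  obtain ⟨u, hu⟩ := hUne
  exact ((hc.2 (hc.1.of_lowerClosure h hU hyc' (fun u hu => (hyc u hu).le) hy) hle) u).not_gt
    (hyc u hu)

theorem le1_of_minimal (h : IsR2Pair le1 le2) (hc : Minimal (IsCovering le1 le2 F) c)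
    (hpq : le1 (c p) (c q)) : F.le1 p q := by
  have hmono := hc.1.strictMono
  induction q using WellFoundedLT.induction with
  | ind q ih =>
    rcases (hmono.le_iff_le.1 (h.le_of_le1 hpq)).eq_or_lt with rfl | hlt
    · exact F.le1_refl p
    by_contra hcon
    refine false_of_minimal_of_le1 h hc hpq (U := Set.Ico p q) ⟨p, le_rfl, hlt⟩
      (fun u hu x hx hux => hcon ?_) (fun _ _ => rfl) (fun u hu => hmono hu.2)
      (fun u hu => hmono.monotone hu.1) (fun x hx u hu hxu => hmono ?_) (hc.1.coversOn _)
    · have hqx : q ≤ x := not_lt.1 fun hxq => hx ⟨hu.1.trans (F.le_of_le1 hux), hxq⟩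
      have hpu := ih u hu.2 (h.le1_of_le_of_le (hmono.monotone hu.1) (hmono hu.2).le hpq)
      exact F.le1_trans p u q hpu (F.le1_of_le_of_le hu.2.le hqx hux)
    · exact not_le.1 fun hpx => hx ⟨hpx, hxu.trans hu.2⟩

end Covering

/-! ### Relations in the image of a minimal covering -/

section Minimal

variable {le1 le2 : Ordinal → Ordinal → Prop} {F : RForest} {W : Set F.P}
  {c y z : F.P → Ordinal} {p q : F.P}

theorem IsCovering.coversOn_Iio_union (h : IsR2Pair le1 le2) (hc : IsCovering le1 le2 F c)
    (hpq : le1 (c p) (c q)) (hyc : Set.EqOn y c (Set.Ico p q)ᶜ)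
    (hya : ∀ x ∈ Set.Ico p q, y x < c p)
    (hy1 : ∀ x ∈ Set.Ico p q, le1 (c x) (c q) → le1 (y x) (c p))
    (hy : CoversOn le1 le2 F (Set.Iio q) y)
    (hW2 : ∀ x ∈ Set.Ico p q, ∀ w ∈ W, ¬F.le2 x w) :
    CoversOn le1 le2 F (Set.Iio q ∪ W) y := by
  intro x _ w hw hxw
  rcases lt_or_ge w q with hwq | hqw
  · exact hy x (hxw.trans hwq) w hwq hxw
  have hwW : w ∈ W := hw.resolve_left hqw.not_gt
  have hcw := hc.coversOn Set.univ x trivial w trivial hxw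
  rw [hyc fun hw => hw.2.not_ge hqw]
  by_cases hxU : x ∈ Set.Ico p q
  · have hpx : c p ≤ c x := hc.strictMono.monotone hxU.1
    have hxq : c x ≤ c q := hc.strictMono.monotone hxU.2.le
    refine ⟨(hya x hxU).trans (hpx.trans_lt hcw.1), fun hle => ?_,
      fun hle => (hW2 x hxU w hwW hle).elim⟩
    have hxq1 : le1 (c x) (c q) := hc.2.1 _ _ (F.le1_of_le_of_le hxU.2.le hqw hle)
    exact h.le1_trans (hy1 x hxU hxq1)
      (h.le1_trans (h.le1_of_le_of_le hpx hxq hpq) (hcw.2.1 hle))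
  · rwa [hyc hxU]

theorem not_coversOn_of_minimal (h : IsR2Pair le1 le2) (hc : Minimal (IsCovering le1 le2 F) c)
    (hzc : Set.EqOn z c (Set.Iio q)) (hzq : ∀ x ∈ {x | F.le1 q x}, z x < c q) :
    ¬CoversOn le1 le2 F (Set.Iio q ∪ {x | F.le1 q x}) z := by
  classical
  intro hz
  set V := {x | F.le1 q x}
  have hVc : ∀ v ∈ V, z v < c v := fun v hv =>
    (hzq v hv).trans_le (hc.1.strictMono.monotone (F.le_of_le1 hv))
  have hlow : ↑(lowerClosure V) ⊆ Set.Iio q ∪ V := by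
    rintro x ⟨v, hv, hxv⟩
    exact (lt_or_ge x q).imp_right fun hqx => F.le1_of_le_of_le hqx hxv hv
  have hle : V.piecewise z c ≤ c := fun x => by
    by_cases hxV : x ∈ V
    · simpa [hxV] using (hVc x hxV).le
    · simp [hxV]
  have hd : IsCovering le1 le2 F (V.piecewise z c) :=
    hc.1.of_lowerClosure (U := V) h (fun u hu x hx hux => hx (F.le1_trans q u x hu hux))
      (V.piecewise_eqOn_compl _ _) (fun v _ => hle v)
      ((hz.mono hlow).congr fun x hx => by
        by_cases hxV : x ∈ V
        · simp [hxV]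
        · simpa [hxV] using (hzc ((hlow hx).resolve_right hxV)).symm)
  have hqV : q ∈ V := F.le1_refl q
  exact (hc.2 hd hle q).not_gt (by simpa [hqV] using hVc q hqV)

/-- The `Σ₂`-reflection of `[p, q)` below `c p` keeps the property `not_coversOn_of_minimal` of
`q`. If no `≤₂`-link crosses `q`, then the reflected points give a smaller covering; otherwise the
link lets `Σ₁`-reflection violate that property below `c p`. -/
theorem false_of_minimal_of_le2 (h : IsR2Pair le1 le2) (hc : Minimal (IsCovering le1 le2 F) c)
    (hpq : p < q) (hpq2 : le2 (c p) (c q)) (hq2 : ∀ u ∈ Set.Ico p q, ¬F.le2 u q) : False := by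
  have hmono := hc.1.strictMono
  have hpq1 := h.le1_of_le2 hpq2
  let V : Set F.P := {x | F.le1 q x}
  obtain ⟨y, hyc, hya, hy, hy1, hyno⟩ := (hc.1.coversOn (Set.Iio q)).reflect_of_le2 h hpq2
    (hmono hpq) (V := V) (U := Set.Ico p q)
    (Set.disjoint_left.2 fun x hxq hqx => (F.le_of_le1 hqx).not_gt hxq) (fun x hx => hx.2)
    (fun x hx => hmono hx.2) (fun x hx hxU => hmono (not_le.1 fun hpx => hxU ⟨hpx, hx⟩))
    fun z => not_coversOn_of_minimal h hc
  by_cases hlink : ∃ u ∈ Set.Ico p q, ∃ s, q ≤ s ∧ F.le2 u s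
  · obtain ⟨u, hu, s, hqs, hus⟩ := hlink
    have hV2 : ∀ x ∈ Set.Ico p q, ∀ v ∈ V, ¬F.le2 x v := fun x hx v hv hxv => hq2 x hx <|
      F.respects2 x q v (F.le1_of_le_of_le hx.2.le (F.le_of_le1 hv) (F.le2_sub_le1 x v hxv)) hv hxv
    have hVs : ∀ v ∈ V, v < s := fun v hv => not_le.1 fun hsv =>
      hV2 u hu s (F.le1_of_le_of_le hqs hsv hv) hus
    have hps : le1 (c p) (c s) := h.le1_trans
      (h.le1_of_le_of_le (hmono.monotone hu.1) (hmono hu.2).le hpq1)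
      (hc.1.2.1 u s (F.le2_sub_le1 u s hus))
    have hyV : ∀ v ∈ V, y v = c v := fun v hv => hyc fun hv' => hv'.2.not_ge (F.le_of_le1 hv)
    obtain ⟨z, hzy, hza, hz⟩ := (hc.1.coversOn_Iio_union h hpq1 hyc hya hy1 hy hV2).reflect_of_le1
      h hps (U := V) (fun v hv => (hyV v hv).trans_lt (hmono (hVs v hv))) fun x hx hxV => by
        by_cases hxU : x ∈ Set.Ico p q
        · exact hya x hxU
        · rw [hyc hxU]
          exact hmono (not_le.1 fun hpx => hxU ⟨hpx, hx.resolve_right hxV⟩)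
    exact hyno z (fun x hx => hzy fun hxV => (F.le_of_le1 hxV).not_gt hx) hza hz
  · push Not at hlink
    have hyV := hc.1.coversOn_Iio_union (W := Set.Ici q) h hpq1 hyc hya hy1 hy hlink
    rw [Set.Iio_union_Ici] at hyV
    have hle : y ≤ c := fun x => by
      by_cases hx : x ∈ Set.Ico p q
      · exact (hya x hx).le.trans (hmono.monotone hx.1)
      · exact (hyc hx).le
    exact (hc.2 (hyV.isCovering h) hle p).not_gt (hya p ⟨le_rfl, hpq⟩)

theorem le2_of_minimal (h : IsR2Pair le1 le2) (hc : Minimal (IsCovering le1 le2 F) c)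
    (hpq : le2 (c p) (c q)) : F.le2 p q := by
  have hmono := hc.1.strictMono
  induction q using WellFoundedLT.induction with
  | ind q ih =>
    rcases (hmono.le_iff_le.1 (h.le_of_le2 hpq)).eq_or_lt with rfl | hlt
    · exact F.le2_refl p
    by_contra hcon
    refine false_of_minimal_of_le2 h hc hlt hpq fun u hu huq => hcon ?_
    have hpu : le1 (c p) (c u) :=
      h.le1_of_le_of_le (hmono.monotone hu.1) (hmono hu.2).le (h.le1_of_le2 hpq)
    exact F.le2_trans p u q
      (ih u hu.2 (h.le2_of_le1_of_le1 hpu (h.le1_of_le2 (hc.1.2.2 u q huq)) hpq)) huq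

end Minimal

/-! ### Uniqueness of minimal coverings -/

section Uniqueness

variable {le1 le2 : Ordinal → Ordinal → Prop} {F : RForest} {c c' d : F.P → Ordinal}
  {p r t x y : F.P}

theorem le_of_minimal_of_eqOn_Iio (h : IsR2Pair le1 le2) (hc : Minimal (IsCovering le1 le2 F) c)
    (hc' : IsCovering le1 le2 F c') (hcc' : Set.EqOn c c' (Set.Iio p)) (hpt : F.le1 p t)
    (hmax : ∀ s, F.le1 p s → s ≤ t) : c t ≤ c' t := by
  classical
  by_contra! hlt
  let U := Set.Icc p t
  have hmem {x u : F.P} (hu : u ∈ U) (hxu : x ≤ u) (hx : x ∉ U) : x < p :=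
    not_le.1 fun hpx => hx ⟨hpx, hxu.trans hu.2⟩
  refine false_of_minimal_of_le1 h hc (hc.1.2.1 p t hpt) (U := U) (d := U.piecewise c' c)
    ⟨p, le_rfl, F.le_of_le1 hpt⟩ (fun u hu x hx hux => ?_) (U.piecewise_eqOn_compl _ _)
    (fun u hu => ?_) (fun u hu => hc.1.strictMono.monotone hu.1)
    (fun x hx u hu hxu => hc.1.strictMono (hmem hu hxu.le hx))
    ((hc'.coversOn _).congr fun x hx => ?_)
  · have hpx : F.le1 p x := F.le1_trans p u x (F.le1_of_le_of_le hu.1 hu.2 hpt) hux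
    exact hx ⟨F.le_of_le1 hpx, hmax x hpx⟩
  · rw [U.piecewise_eq_of_mem _ _ hu]
    exact (hc'.strictMono.monotone hu.2).trans_lt hlt
  · obtain ⟨u, hu, hxu⟩ := mem_lowerClosure.1 hx
    by_cases hxU : x ∈ U
    · exact U.piecewise_eq_of_mem _ _ hxU
    · exact (U.piecewise_eq_of_notMem _ _ hxU).trans (hcc' (hmem hu hxu hxU))

theorem lt_of_minimal_of_lt (h : IsR2Pair le1 le2) (hc : Minimal (IsCovering le1 le2 F) c)
    (hc' : IsCovering le1 le2 F c') (hrt : F.le1 r t) (hct : c t ≤ c' t) (hr : c r < c' r)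
    (hxt : x < t) (hmax : ∀ s ≤ x, F.le1 s t → s ≤ r) : c x < c' r := by
  by_contra! hxr
  have hmono := hc.1.strictMono
  have hrx' : r < x := hmono.lt_iff_lt.1 (hr.trans_le hxr)
  let U : Set F.P := {v | r < v ∧ v < t ∧ (∀ s ≤ v, F.le1 s t → s ≤ r) ∧ c' r ≤ c v}
  refine false_of_minimal_of_le1 h hc (hc'.2.1 r t hrt) (U := U) (d := c)
    ⟨x, hrx', hxt, hmax, hxr⟩ ?_ (fun _ _ => rfl) (fun v hv => (hmono hv.2.1).trans_le hct)
    (fun v hv => hv.2.2.2) (fun w hw v hv hwv => ?_) (hc.1.coversOn _)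
  · rintro u ⟨hru, hut, hu, hcu⟩ w hw huw
    have hle : u ≤ w := F.le_of_le1 huw
    have hnot (s) (hus : u ≤ s) (hsw : s ≤ w) (hst : F.le1 s t) : False := (hu u le_rfl <|
      F.le1_trans u s t (F.le1_of_le_of_le hus hsw huw) hst).not_gt hru
    have hwt : w < t := not_le.1 fun htw => hnot t hut.le htw (F.le1_refl t)
    refine hw ⟨hru.trans_le hle, hwt, fun s hsw hst => ?_, hcu.trans (hmono.monotone hle)⟩
    rcases le_total s u with hsu | hus
    · exact hu s hsu hst
    · exact (hnot s hus hsw hst).elim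
  · by_contra! hcw
    exact hw ⟨hmono.lt_iff_lt.1 (hr.trans_le hcw), hwv.trans hv.2.1,
      fun s hs => hv.2.2.1 s (hs.trans hwv.le), hcw⟩

/-- The initial segment of `[0, t]` up to the first point of the `≤₁`-branch from `p` to `t` at
which `c` is not below `c'`; it is the part on which `c` can be grafted onto `c'`. -/
def graftDomain (F : RForest) (c c' : F.P → Ordinal) (p t : F.P) : Set F.P :=
  {x | x ≤ t ∧ ∀ r ≤ x, p ≤ r → F.le1 r t → c r < c' r}

theorem lt_of_mem_graftDomain (h : IsR2Pair le1 le2) (hc : Minimal (IsCovering le1 le2 F) c)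
    (hc' : IsCovering le1 le2 F c') (hpt : F.le1 p t) (hct : c t ≤ c' t)
    (hx : x ∈ graftDomain F c c' p t) (hpx : p ≤ x) : c x < c' x := by
  obtain ⟨r, ⟨hrx, hrt⟩, hmax⟩ :=
    (Set.toFinite {r | r ≤ x ∧ F.le1 r t}).exists_maximal ⟨p, hpx, hpt⟩
  have hmax' : ∀ s ≤ x, F.le1 s t → s ≤ r := fun s hsx hst =>
    (le_total s r).elim id (hmax ⟨hsx, hst⟩)
  have hr : c r < c' r := hx.2 r hrx (hmax' p hpx hpt) hrt
  rcases hx.1.eq_or_lt with rfl | hxt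
  · rwa [(hmax' x le_rfl (F.le1_refl x)).antisymm hrx]
  · exact (lt_of_minimal_of_lt h hc hc' hrt hct hr hxt hmax').trans_le
      (hc'.strictMono.monotone hrx)

theorem le1_and_le2_of_branch (h : IsR2Pair le1 le2) (hc : IsCovering le1 le2 F c)
    (hc' : IsCovering le1 le2 F c') (hrt : F.le1 r t) (hct : c t ≤ c' t) (hr : c' r ≤ c r)
    (hxr : x ≤ r) (hry : r ≤ y) (hyt : y ≤ t) (hx : c x ≤ c' x) (hxy : F.le1 x y) :
    le1 (c x) (c' y) ∧ (F.le2 x y → le2 (c x) (c' y)) := by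
  have hxr1 : F.le1 x r := F.le1_of_le_of_le hxr hry hxy
  have hry1 : F.le1 r y := F.le1_of_le_of_le hry hyt hrt
  have hxr' : c' x ≤ c' r := hc'.strictMono.monotone hxr
  have hcxr : le1 (c x) (c' r) := h.le1_of_le_of_le (hx.trans hxr') hr (hc.2.1 x r hxr1)
  refine ⟨h.le1_trans hcxr (hc'.2.1 r y hry1), fun hxy2 => ?_⟩
  have hrr : le1 (c' r) (c r) := h.le1_of_le_of_le hr
    ((hc.strictMono.monotone (F.le_of_le1 hrt)).trans hct) (hc'.2.1 r t hrt)
  have hcxr2 : le2 (c x) (c' r) :=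
    h.le2_of_le1_of_le1 hcxr hrr (hc.2.2 x r (F.respects2 x r y hxr1 hry1 hxy2))
  have hcxx : le1 (c x) (c' x) := h.le1_of_le_of_le hx hxr' hcxr
  exact h.le2_trans (h.le2_of_le1_of_le1 hcxx (hc'.2.1 x r hxr1) hcxr2) (hc'.2.2 x y hxy2)

open Classical in
theorem IsCovering.graft (h : IsR2Pair le1 le2) (hc : IsCovering le1 le2 F c)
    (hc' : IsCovering le1 le2 F c') (hcc' : Set.EqOn c c' (Set.Iio p)) (hpt : F.le1 p t)
    (hmax : ∀ s, F.le1 p s → s ≤ t) (hct : c t ≤ c' t)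
    (hlt : ∀ x ∈ graftDomain F c c' p t, p ≤ x → c x < c' x) :
    IsCovering le1 le2 F ((graftDomain F c c' p t).piecewise c c') := by
  set D := graftDomain F c c' p t
  refine CoversOn.isCovering h fun x _ y _ hxy => ?_
  have key := hc.coversOn Set.univ x trivial y trivial hxy
  have key' := hc'.coversOn Set.univ x trivial y trivial hxy
  by_cases hy : y ∈ D
  · have hx : x ∈ D := ⟨hxy.le.trans hy.1, fun r hrx => hy.2 r (hrx.trans hxy.le)⟩
    rwa [D.piecewise_eq_of_mem _ _ hx, D.piecewise_eq_of_mem _ _ hy]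
  rw [D.piecewise_eq_of_notMem _ _ hy]
  by_cases hx : x ∈ D
  · rw [D.piecewise_eq_of_mem _ _ hx]
    rcases lt_or_ge x p with hxp | hpx
    · rwa [hcc' hxp]
    have hrel (hxy1 : F.le1 x y) :
        le1 (c x) (c' y) ∧ (F.le2 x y → le2 (c x) (c' y)) := by
      have hyt : y ≤ t := hmax y (F.le1_trans p x y (F.le1_of_le_of_le hpx hx.1 hpt) hxy1)
      obtain ⟨r, hry, hpr, hrt, hr⟩ : ∃ r ≤ y, p ≤ r ∧ F.le1 r t ∧ c' r ≤ c r := by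
        by_contra! hcon
        exact hy ⟨hyt, hcon⟩
      have hxr : x ≤ r := (not_le.1 fun hrx => (hx.2 r hrx hpr hrt).not_ge hr).le
      exact le1_and_le2_of_branch h hc hc' hrt hct hr hxr hry hyt (hlt x hx hpx).le hxy1
    exact ⟨(hlt x hx hpx).trans key'.1, fun hxy1 => (hrel hxy1).1,
      fun hxy2 => (hrel (F.le2_sub_le1 x y hxy2)).2 hxy2⟩
  · rwa [D.piecewise_eq_of_notMem _ _ hx]

theorem not_lt_of_minimal_of_eqOn_Iio (h : IsR2Pair le1 le2)
    (hc : Minimal (IsCovering le1 le2 F) c) (hc' : Minimal (IsCovering le1 le2 F) c')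
    (hcc' : Set.EqOn c c' (Set.Iio p)) : ¬c p < c' p := by
  classical
  intro hp
  obtain ⟨t, hpt, hmax⟩ := (Set.toFinite {t | F.le1 p t}).exists_maximal ⟨p, F.le1_refl p⟩
  have hmax' : ∀ s, F.le1 p s → s ≤ t := fun s hs => (le_total s t).elim id (hmax hs)
  have hct : c t ≤ c' t := le_of_minimal_of_eqOn_Iio h hc hc'.1 hcc' hpt hmax'
  have hlt : ∀ x ∈ graftDomain F c c' p t, p ≤ x → c x < c' x := fun x hx =>
    lt_of_mem_graftDomain h hc hc'.1 hpt hct hx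
  have hgraft := hc.1.graft h hc'.1 hcc' hpt hmax' hct hlt
  set D := graftDomain F c c' p t
  have hle : D.piecewise c c' ≤ c' := fun x => by
    by_cases hx : x ∈ D
    · rw [D.piecewise_eq_of_mem _ _ hx]
      exact (lt_or_ge x p).elim (fun hxp => (hcc' hxp).le) fun hpx => (hlt x hx hpx).le
    · exact (D.piecewise_eq_of_notMem _ _ hx).le
  have hpD : p ∈ D := ⟨F.le_of_le1 hpt, fun r hrp hpr _ => hrp.antisymm hpr ▸ hp⟩
  exact (hc'.2 hgraft hle p).not_gt (by rwa [D.piecewise_eq_of_mem _ _ hpD])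

theorem eq_of_minimal (h : IsR2Pair le1 le2) (hc : Minimal (IsCovering le1 le2 F) c)
    (hc' : Minimal (IsCovering le1 le2 F) c') : c = c' := by
  funext p
  induction p using WellFoundedLT.induction with
  | ind p ih =>
    have hcc' : Set.EqOn c c' (Set.Iio p) := ih
    exact le_antisymm (not_lt.1 (not_lt_of_minimal_of_eqOn_Iio h hc' hc hcc'.symm))
      (not_lt.1 (not_lt_of_minimal_of_eqOn_Iio h hc hc' hcc'))

theorem exists_isLeast_isCovering (h : IsR2Pair le1 le2) (hd : IsCovering le1 le2 F d) :
    ∃ c, IsLeast {c | IsCovering le1 le2 F c} c := by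
  obtain ⟨c, -, hc⟩ := exists_minimal_le_of_wellFoundedLT (IsCovering le1 le2 F) d hd
  refine ⟨c, hc.1, fun e he => ?_⟩
  obtain ⟨c', hce, hc'⟩ := exists_minimal_le_of_wellFoundedLT (IsCovering le1 le2 F) e he
  exact (eq_of_minimal h hc hc').trans_le hce

end Uniqueness

/-! ### Isominimal realizations -/

section Realization

variable {le1 le2 : Ordinal → Ordinal → Prop} {F : RForest} {c : F.P → Ordinal}
  {X Y : Finset Ordinal}

theorem exists_isCovering_lt_oneInfty (h : IsR2Pair le1 le2) (F : RForest) :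
    ∃ c, IsCovering le1 le2 F c ∧ ∀ p, c p < OneInfty le2 := by
  obtain ⟨β, hβ, hβν⟩ := h.exists_chain_lt_oneInfty (Fintype.card F.P)
  let k := (Fintype.orderIsoFinOfCardEq F.P rfl).symm
  refine ⟨β ∘ k, CoversOn.isCovering h fun x _ y _ hxy => ?_, fun p => hβν (k p)⟩
  obtain ⟨hlt, hle2⟩ := hβ _ _ (k.strictMono hxy)
  exact ⟨hlt, fun _ => h.le1_of_le2 hle2, fun _ => hle2⟩

theorem realizes_image_of_minimal (h : IsR2Pair le1 le2)
    (hc : Minimal (IsCovering le1 le2 F) c) : Realizes le1 le2 F (Finset.univ.image c) := by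
  let e : F.P ≃ {x // x ∈ Finset.univ.image c} :=
    (Equiv.ofInjective c hc.1.strictMono.injective).trans
      (Equiv.subtypeEquivRight fun x => by simp)
  exact ⟨e, fun p q => ⟨hc.1.1 p q, ⟨hc.1.2.1 p q, le1_of_minimal h hc⟩,
    ⟨hc.1.2.2 p q, le2_of_minimal h hc⟩⟩⟩

theorem Realizes.exists_isCovering (hY : Realizes le1 le2 F Y) :
    ∃ d, IsCovering le1 le2 F d ∧ Finset.univ.image d = Y := by
  obtain ⟨e, he⟩ := hY
  refine ⟨fun p => e p, ⟨fun p q => (he p q).1, fun p q => (he p q).2.1.1,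
    fun p q => (he p q).2.2.1⟩, ?_⟩
  ext y
  simp only [Finset.mem_image, Finset.mem_univ, true_and]
  exact ⟨fun ⟨p, hp⟩ => hp ▸ (e p).2, fun hy => ⟨e.symm ⟨y, hy⟩, by simp⟩⟩

theorem pwLE_image {P : Type} [Fintype P] [LinearOrder P] {f g : P → Ordinal}
    (hf : StrictMono f) (hg : StrictMono g) (hfg : f ≤ g) :
    pwLE (Finset.univ.image f) (Finset.univ.image g) := by
  have hX : (Finset.univ.image f).card = Fintype.card P :=
    Finset.card_image_of_injective _ hf.injective
  have hY : (Finset.univ.image g).card = Fintype.card P :=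
    Finset.card_image_of_injective _ hg.injective
  let k := Fintype.orderIsoFinOfCardEq P hX.symm
  have hfk := Finset.orderEmbOfFin_unique rfl (f := f ∘ k)
    (fun x => Finset.mem_image_of_mem f (Finset.mem_univ _)) (hf.comp k.strictMono)
  have hgk := Finset.orderEmbOfFin_unique (hY.trans hX.symm) (f := g ∘ k)
    (fun x => Finset.mem_image_of_mem g (Finset.mem_univ _)) (hg.comp k.strictMono)
  refine ⟨hX.trans hY.symm, fun i => ?_⟩
  rw [Finset.coe_orderIsoOfFin_apply, Finset.coe_orderIsoOfFin_apply, ← hfk, ← hgk]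
  exact hfg _

theorem pwLE_antisymm (hXY : pwLE X Y) (hYX : pwLE Y X) : X = Y := by
  obtain ⟨hcard, hXY⟩ := hXY
  obtain ⟨_, hYX⟩ := hYX
  have heq (i) : X.orderEmbOfFin rfl i = Y.orderEmbOfFin hcard.symm i :=
    le_antisymm (hXY i) (hYX (Fin.cast hcard i))
  rw [← Finset.coe_inj, ← Finset.range_orderEmbOfFin X rfl,
    ← Finset.range_orderEmbOfFin Y hcard.symm, funext heq]

end Realization

theorem stmt0 (le1 le2 : Ordinal → Ordinal → Prop) (h : IsR2Pair le1 le2) (F : RForest) :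
    ∃ X : Finset Ordinal, IsIsominimalRealization le1 le2 F X ∧
      (∀ Y : Finset Ordinal, IsIsominimalRealization le1 le2 F Y → Y = X) ∧
      ∀ x ∈ X, x < OneInfty le2 := by
  obtain ⟨d, hd, hdν⟩ := exists_isCovering_lt_oneInfty h F
  obtain ⟨c, hc⟩ := exists_isLeast_isCovering h hd
  have hreal : Realizes le1 le2 F (Finset.univ.image c) := realizes_image_of_minimal h hc.minimal
  have hpw (Y) (hY : Realizes le1 le2 F Y) : pwLE (Finset.univ.image c) Y := by
    obtain ⟨e, he, rfl⟩ := hY.exists_isCovering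
    exact pwLE_image hc.1.strictMono he.strictMono (hc.2 he)
  refine ⟨Finset.univ.image c, ⟨hreal, hpw⟩,
    fun Y hY => pwLE_antisymm (hY.2 _ hreal) (hpw Y hY.1), fun x hx => ?_⟩
  obtain ⟨p, -, rfl⟩ := Finset.mem_image.1 hx
  exact (hc.2 hd p).trans_lt (hdν p)
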